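/- Let F : ℕ → ℂ with ‖F‖_{ℓ^{1,∞}(ℕ)} < ∞. For every finitely supported f : T → ℂ and every λ > 0, the function 𝒫f(x) = Σ_{n≥0} F(n) ∇_ε* f(𝔭ⁿ(x)) (for each x only finitely many terms are nonzero) satisfies μ({x ∈ T : |𝒫f(x)| > λ}) ≤ 3 · ‖F‖_{ℓ^{1,∞}(ℕ)} · ‖ε‖_∞ · ‖f‖_{L¹(μ)} / λ. -/

import Mathlib

open MeasureTheory ENNReal Set Function
open scoped NNReal ENNReal Classical

noncomputable section

/-- A homogeneous tree of degree `q+1` with a distinguished end (mythical ancestor),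
encoded through its graph distance `dist`, horocyclic level function `level`,
and predecessor map `pred`. -/
structure FlowTree (q : ℕ) where
  V : Type
  countableV : Countable V
  dist : V → V → ℕ
  level : V → ℤ
  pred : V → V
  dist_self : ∀ x, dist x x = 0
  eq_of_dist_eq_zero : ∀ x y, dist x y = 0 → x = y
  dist_comm : ∀ x y, dist x y = dist y x
  dist_triangle : ∀ x y z, dist x z ≤ dist x y + dist y z
  level_pred : ∀ x, level (pred x) = level x + 1
  succ_finite : ∀ x, Set.Finite {y | pred y = x}
  succ_card : ∀ x, Nat.card {y // pred y = x} = q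
  dist_le : ∀ (x y : V) (n m : ℕ), pred^[n] x = pred^[m] y → dist x y ≤ n + m
  dist_spec : ∀ x y, ∃ n m : ℕ, pred^[n] x = pred^[m] y ∧ n + m = dist x y

namespace FlowTree

variable {q : ℕ} (S : FlowTree q)

/-- The canonical flow measure weight `μ(x) = q^{ℓ(x)}`, as an extended nonnegative real. -/
def w (x : S.V) : ℝ≥0∞ := (q : ℝ≥0∞) ^ ((S.level x : ℤ) : ℝ)

/-- The canonical flow measure weight `μ(x) = q^{ℓ(x)}`, as a real number. -/
def wR (x : S.V) : ℝ := (q : ℝ) ^ (S.level x)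

/-- The canonical flow measure of a set `E ⊆ T`. -/
def muS (E : Set S.V) : ℝ≥0∞ := ∑' x : E, S.w x

/-- The `L^p(μ)` (quasi)norm, `p ∈ [1,∞]`. -/
def lpNorm (p : ℝ≥0∞) {E : Type*} [NNNorm E] (f : S.V → E) : ℝ≥0∞ :=
  if p = ∞ then ⨆ x, (‖f x‖₊ : ℝ≥0∞)
  else (∑' x, (‖f x‖₊ : ℝ≥0∞) ^ p.toReal * S.w x) ^ (1 / p.toReal)

/-- The weak `L^{1,∞}(μ)` quasinorm `sup_{λ>0} λ · μ({|f| > λ})`. -/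
def wkNorm {E : Type*} [NNNorm E] (f : S.V → E) : ℝ≥0∞ :=
  ⨆ t : ℝ≥0, (t : ℝ≥0∞) * S.muS {x | t < ‖f x‖₊}

/-- `Σf(x) = f(𝔭(x))`. -/
def sig (f : S.V → ℂ) : S.V → ℂ := fun x => f (S.pred x)

/-- `Σ*f(x) = (1/q) Σ_{y ∈ succ(x)} f(y)`. -/
def sigStar (f : S.V → ℂ) : S.V → ℂ :=
  fun x => (q : ℂ)⁻¹ * ∑' y : {y | S.pred y = x}, f y.1

/-- The flow gradient `∇ = id − Σ`. -/
def grad (f : S.V → ℂ) : S.V → ℂ := fun x => f x - f (S.pred x)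

/-- `∇* = id − Σ*`. -/
def gradStar (f : S.V → ℂ) : S.V → ℂ := fun x => f x - S.sigStar f x

/-- The modulus of the gradient `Df(x) = Σ_{y ∼ x} |f(x) − f(y)|`. -/
def Dmod (f : S.V → ℂ) : S.V → ℝ :=
  fun x => ∑' y : {y | S.dist x y = 1}, ‖f x - f y.1‖

/-- `Σ̃_n = Σ^n` for `n ≥ 0` and `(Σ*)^{−n}` for `n < 0`. -/
def sigTilde (n : ℤ) (f : S.V → ℂ) : S.V → ℂ :=
  if 0 ≤ n then (S.sig)^[n.toNat] f else (S.sigStar)^[(-n).toNat] f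

/-- `Σ*` acting on real-valued functions. -/
def sigStarR (f : S.V → ℝ) : S.V → ℝ :=
  fun x => (q : ℝ)⁻¹ * ∑' y : {y | S.pred y = x}, f y.1

/-- The flow Laplacian `𝓛 = id − (Σ + Σ*)/2`, acting pointwise on real functions. -/
def lapR (f : S.V → ℝ) : S.V → ℝ :=
  fun x => f x - (f (S.pred x) + S.sigStarR f x) / 2

/-- `δ_y/μ(y)`, the normalized delta at `y`. -/
def deltaMu (y : S.V) : S.V → ℝ := fun z => if z = y then (S.wR y)⁻¹ else 0

/-- The heat kernel `H_t(x,y)` of the flow Laplacian, i.e. `(e^{−t𝓛} (δ_y/μ(y)))(x)`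
computed via the exponential power series of the bounded operator `𝓛`. -/
def Hker (t : ℝ) (x y : S.V) : ℝ :=
  ∑' n : ℕ, ((-t) ^ n / (n.factorial : ℝ)) * ((S.lapR)^[n] (S.deltaMu y)) x

/-- The integral kernel `K(x,y)` of `𝓛^{−1/2}`, by subordination. -/
def Kker (x y : S.V) : ℝ :=
  (Real.sqrt Real.pi)⁻¹ * ∫ t in Set.Ioi (0 : ℝ), S.Hker t x y * t ^ (-(1 : ℝ)/2)

/-- The Riesz transform `𝓡 = ∇𝓛^{−1/2}`, defined on finitely supported functions. -/
def riesz (f : S.V → ℂ) : S.V → ℂ :=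
  fun x => ∑' y, ((S.Kker x y - S.Kker (S.pred x) y : ℝ) : ℂ) * f y * (S.wR y : ℂ)

/-- The integral operator with almost-radial kernel `q^{−ℓ(x)/2} G(d(x,y)) q^{−ℓ(y)/2}`. -/
def kernelOp (G : ℕ → ℂ) (f : S.V → ℂ) : S.V → ℂ :=
  fun x => ∑' y, (((q : ℝ) ^ (-((S.level x : ℤ) : ℝ)/2) * (q : ℝ) ^ (-((S.level y : ℤ) : ℝ)/2) : ℝ) : ℂ)
    * G (S.dist x y) * f y * (S.wR y : ℂ)

/-- The ε-horizontal gradient `∇_ε f(x) = (1/q) Σ_{y ∈ succ(x)} ε(y) f(y)`. -/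
def hgrad (ε f : S.V → ℂ) : S.V → ℂ :=
  fun x => (q : ℂ)⁻¹ * ∑' y : {y | S.pred y = x}, ε y.1 * f y.1

/-- The adjoint ε-horizontal gradient `∇_ε* f(x) = conj(ε(x)) f(𝔭(x))`. -/
def hgradStar (ε f : S.V → ℂ) : S.V → ℂ :=
  fun x => (starRingEnd ℂ) (ε x) * f (S.pred x)

/-- `‖ε‖_∞`. -/
def epsSup (ε : S.V → ℂ) : ℝ≥0∞ := ⨆ x, (‖ε x‖₊ : ℝ≥0∞)

/-- The `L²(μ)` inner product. -/
def inner2 (f g : S.V → ℂ) : ℂ := ∑' x, f x * (starRingEnd ℂ) (g x) * (S.wR x : ℂ)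

/-- `y ≤ x` iff `d(x,y) = ℓ(x) − ℓ(y)`. -/
def le' (y x : S.V) : Prop := (S.dist x y : ℤ) = S.level x - S.level y

/-- Admissible trapezoids of `(T,μ)`. -/
def IsAdmissibleTrapezoid (F : Set S.V) : Prop :=
  (∃ x, F = {x}) ∨
  ∃ (x₀ : S.V) (h1 h2 : ℕ), 0 < h1 ∧ 2 * h1 ≤ h2 ∧ h2 ≤ 12 * h1 ∧
    F = {x | S.le' x x₀ ∧ S.level x₀ - (h2 : ℤ) < S.level x ∧ S.level x ≤ S.level x₀ - (h1 : ℤ)}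

/-- `(1,∞)`-atoms of `(T,μ)`. -/
def IsOneInftyAtom (a : S.V → ℂ) : Prop :=
  ∃ F : Set S.V, S.IsAdmissibleTrapezoid F ∧ Function.support a ⊆ F ∧
    (∑' x, a x * (S.wR x : ℂ)) = 0 ∧ ∀ x, (‖a x‖₊ : ℝ≥0∞) ≤ (S.muS F)⁻¹

end FlowTree

namespace ZRiesz

/-- The discrete Laplacian on `ℤ`. -/
def deltaZ (F : ℤ → ℝ) : ℤ → ℝ := fun n => F n - (F (n + 1) + F (n - 1)) / 2

/-- The heat kernel `h_t^ℤ = e^{−tΔ_ℤ} δ_0` on `ℤ`, via the exponential power series. -/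
def heatZ (t : ℝ) (n : ℤ) : ℝ :=
  ∑' k : ℕ, ((-t) ^ k / (k.factorial : ℝ)) *
    (deltaZ^[k] (fun m => if m = 0 then (1 : ℝ) else 0)) n

/-- Kernel of the Riesz transform on `ℤ`: `k_ℤ(n) = π^{−1/2} ∫₀^∞ (∇_ℤ h_t^ℤ)(n) t^{−1/2} dt`. -/
def kZ (n : ℤ) : ℝ :=
  (Real.sqrt Real.pi)⁻¹ * ∫ t in Set.Ioi (0 : ℝ), (heatZ t n - heatZ t (n + 1)) * t ^ (-(1 : ℝ)/2)

/-- Kernel of the skew-symmetric part: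
`k̃_ℤ(n) = π^{−1/2} ∫₀^∞ (∇̃_ℤ h_t^ℤ)(n) t^{−1/2} dt`. -/
def ktZ (n : ℤ) : ℝ :=
  (Real.sqrt Real.pi)⁻¹ *
    ∫ t in Set.Ioi (0 : ℝ), (heatZ t (n - 1) - heatZ t (n + 1)) * t ^ (-(1 : ℝ)/2)

/-- The closed formula `k̃_ℤ(m) = (2√2/π) m/(m² − 1/4)`. -/
def ktZc (m : ℤ) : ℝ := (2 * Real.sqrt 2 / Real.pi) * (m : ℝ) / ((m : ℝ) ^ 2 - 1/4)

/-- `G(n) = Σ_{k≥0} q^{−(n+2k)/2} k̃_ℤ(n+2k+1)` (subordination kernel version). -/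
def Gint (q : ℕ) (n : ℕ) : ℝ :=
  ∑' k : ℕ, (q : ℝ) ^ (-(((n : ℝ)) + 2 * (k : ℝ))/2) * ktZ ((n : ℤ) + 2 * (k : ℤ) + 1)

/-- `G(n) = Σ_{k≥0} q^{−(n+2k)/2} k̃_ℤ(n+2k+1)` (closed formula version). -/
def Gc (q : ℕ) (n : ℕ) : ℝ :=
  ∑' k : ℕ, (q : ℝ) ^ (-(((n : ℝ)) + 2 * (k : ℝ))/2) * ktZc ((n : ℤ) + 2 * (k : ℤ) + 1)

/-- The `ℓ^p(ℤ)` norm. -/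
def zlpNorm (p : ℝ≥0∞) (F : ℤ → ℂ) : ℝ≥0∞ :=
  if p = ∞ then ⨆ n, (‖F n‖₊ : ℝ≥0∞)
  else (∑' n : ℤ, (‖F n‖₊ : ℝ≥0∞) ^ p.toReal) ^ (1 / p.toReal)

/-- The `ℓ^{1,∞}(ℕ)` quasinorm. -/
def natWk (F : ℕ → ℂ) : ℝ≥0∞ :=
  ⨆ t : ℝ≥0, (t : ℝ≥0∞) * ∑' (_ : {n : ℕ | t < ‖F n‖₊}), (1 : ℝ≥0∞)

end ZRiesz

/-- The punctured boundary `Ω = ∂T \ {ω_*}` of the tree, together with the measure `ν`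
with `ν(Ω_x) = q^{ℓ(x)}`.  `vert ω n` is the vertex `ω_n` of level `n` on the geodesic
`[ω, ω_*]`. -/
structure FlowTreeBoundary {q : ℕ} (S : FlowTree q) where
  Ω : Type
  mΩ : MeasurableSpace Ω
  ν : @MeasureTheory.Measure Ω mΩ
  vert : Ω → ℤ → S.V
  level_vert : ∀ ω n, S.level (vert ω n) = n
  pred_vert : ∀ ω n, S.pred (vert ω n) = vert ω (n + 1)
  vert_surj : ∀ x : S.V, ∃ ω, vert ω (S.level x) = x
  vert_inj : ∀ ω ω', (∀ n, vert ω n = vert ω' n) → ω = ω'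
  meas_cone : ∀ x : S.V, @MeasurableSet Ω mΩ {ω | vert ω (S.level x) = x}
  nu_cone : ∀ x : S.V, ν {ω | vert ω (S.level x) = x} = (q : ℝ≥0∞) ^ ((S.level x : ℤ) : ℝ)

attribute [instance] FlowTreeBoundary.mΩ

namespace FlowTreeBoundary

variable {q : ℕ} {S : FlowTree q} (B : FlowTreeBoundary S)

/-- The product measure `ν × #` on `Ω × ℤ`. -/
def pm : MeasureTheory.Measure (B.Ω × ℤ) := B.ν.prod MeasureTheory.Measure.count

/-- `Ω_x = {ω : x ∈ [ω, ω_*]}`. -/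
def cone (x : S.V) : Set B.Ω := {ω | B.vert ω (S.level x) = x}

/-- The lifting operator `Φf(ω,n) = f(ω_n)`. -/
def lift (f : S.V → ℂ) : B.Ω × ℤ → ℂ := fun p => f (B.vert p.1 p.2)

/-- The lifting operator on `ℝ≥0∞`-valued functions. -/
def liftNN (f : S.V → ℝ≥0∞) : B.Ω × ℤ → ℝ≥0∞ := fun p => f (B.vert p.1 p.2)

/-- The adjoint `Φ*g(x) = ν(Ω_x)^{−1} ∫_{Ω_x} g(ω, ℓ(x)) dν(ω)`. -/
def liftStar (g : B.Ω × ℤ → ℂ) : S.V → ℂ :=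
  fun x => ((B.ν (B.cone x)).toReal)⁻¹ * ∫ ω in B.cone x, g (ω, S.level x) ∂B.ν

/-- The adjoint `Φ*` on `ℝ≥0∞`-valued functions. -/
def liftStarNN (g : B.Ω × ℤ → ℝ≥0∞) : S.V → ℝ≥0∞ :=
  fun x => (B.ν (B.cone x))⁻¹ * ∫⁻ ω in B.cone x, g (ω, S.level x) ∂B.ν

end FlowTreeBoundary

/-- The weak `L^{1,∞}(μ)` quasinorm with respect to a measure. -/
def wkMeas {α : Type*} [MeasurableSpace α] (μ : MeasureTheory.Measure α) (g : α → ℂ) : ℝ≥0∞ :=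
  ⨆ t : ℝ≥0, (t : ℝ≥0∞) * μ {a | t < ‖g a‖₊}

/-- The weak `L^{1,∞}(μ)` quasinorm for `ℝ≥0∞`-valued functions. -/
def wkMeasNN {α : Type*} [MeasurableSpace α] (μ : MeasureTheory.Measure α) (g : α → ℝ≥0∞) :
    ℝ≥0∞ :=
  ⨆ t : ℝ≥0, (t : ℝ≥0∞) * μ {a | (t : ℝ≥0∞) < g a}

end

/-!
The terms `u n = F n · ∇_ε* f` are martingale differences for the flow measure: `u n` sums to zero
over the successors of each vertex, hence is orthogonal in `L²(μ)` to every function of the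
predecessor, and since `Σ` preserves `μ`, the functions `Σⁿ(u n)` are mutually orthogonal. They are
moreover dominated by a function of the predecessor, `‖u n x‖ ≤ a n (𝔭 x)` with
`a n z = ‖F n‖ ‖ε‖_∞ ‖f z‖`, so that truncating `u n` to `{a n (𝔭 x) ≤ t}` keeps it a martingale
difference. Where the truncation changes nothing Chebyshev's inequality and orthogonality apply,
and the exceptional set is controlled by a union bound; the two contributions add up to
`t² μ{‖∑ Σⁿ(u n)‖ > t} ≤ ∑ₙ ∫ min(a n, t)² dμ`. For fixed `z`, the layer-cake formula bounds
`∑ₙ min(a n z, t)²` by `2 t ‖F‖_{ℓ^{1,∞}} ‖ε‖_∞ ‖f z‖`.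
-/

theorem sum_norm_add_sq_of_sum_eq_zero {ι E : Type*} [NormedAddCommGroup E]
    [InnerProductSpace ℝ E] {s : Finset ι} {u : ι → E} (hu : ∑ i ∈ s, u i = 0) (h : E) :
    ∑ i ∈ s, ‖u i + h‖ ^ 2 = ∑ i ∈ s, (‖u i‖ ^ 2 + ‖h‖ ^ 2) := by
  have hcross : ∑ i ∈ s, 2 * inner ℝ (u i) h = 0 := by
    rw [← Finset.mul_sum, ← sum_inner, hu, inner_zero_left, mul_zero]
  simp only [norm_add_sq_real, Finset.sum_add_distrib, hcross, add_zero]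

theorem lintegral_min_sq_le_of_mul_meas_lt_le {α : Type*} [MeasurableSpace α] {μ : Measure α}
    {g : α → ℝ≥0∞} (hg : AEMeasurable g μ) {C : ℝ≥0∞}
    (hC : ∀ t : ℝ≥0, t * μ {x | t < g x} ≤ C) (s : ℝ≥0) :
    ∫⁻ x, min (g x) s ^ 2 ∂μ ≤ 2 * C * s := by
  have hfin : ∀ x, min (g x) s ≠ ∞ := fun x => ne_top_of_le_ne_top coe_ne_top (min_le_right _ _)
  have hsq : ∀ x, ENNReal.ofReal ((min (g x) s).toReal ^ (2 : ℝ)) = min (g x) s ^ 2 := fun x => by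
    rw [Real.rpow_two, ENNReal.ofReal_pow toReal_nonneg, ofReal_toReal (hfin x)]
  have hlevel : ∀ t ∈ Ioi (0 : ℝ),
      μ {x | t < (min (g x) s).toReal} * ENNReal.ofReal (t ^ (2 - 1 : ℝ))
        ≤ (Iio (s : ℝ)).indicator (fun _ => C) t := by
    intro t ht
    have hiff : ∀ x, t < (min (g x) s).toReal ↔ ENNReal.ofReal t < g x ∧ t < s := fun x => by
      rw [← ofReal_lt_iff_lt_toReal (le_of_lt ht) (hfin x), lt_min_iff, ← ofReal_coe_nnreal,
        ofReal_lt_ofReal_iff_of_nonneg (le_of_lt ht)]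
    simp only [hiff]
    by_cases hts : t < s
    · rw [indicator_of_mem (mem_Iio.2 hts), mul_comm]
      simp only [hts, and_true, show (2 - 1 : ℝ) = 1 by norm_num, Real.rpow_one]
      exact hC t.toNNReal
    · simp [hts]
  calc ∫⁻ x, min (g x) s ^ 2 ∂μ
      = ENNReal.ofReal 2 * ∫⁻ t in Ioi (0 : ℝ),
          μ {x | t < (min (g x) s).toReal} * ENNReal.ofReal (t ^ (2 - 1 : ℝ)) := by
        rw [← lintegral_rpow_eq_lintegral_meas_lt_mul μ (.of_forall fun _ => toReal_nonneg)
          (hg.min aemeasurable_const).ennreal_toReal two_pos]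
        exact lintegral_congr fun x => (hsq x).symm
    _ ≤ ENNReal.ofReal 2 * ∫⁻ t in Ioi (0 : ℝ), (Iio (s : ℝ)).indicator (fun _ => C) t := by
        gcongr _ * ?_
        exact setLIntegral_mono' measurableSet_Ioi hlevel
    _ = 2 * C * s := by
        simp [lintegral_indicator measurableSet_Iio, Measure.restrict_restrict, Iio_inter_Ioi,
          mul_assoc]

theorem sq_le_sum_indicator_add_enorm_sum_indicator_sq {ι α E : Type*} [NormedAddCommGroup E]
    {s : Finset ι} {u : ι → α → E} {x : ι → α} {t : ℝ≥0} (B : ι → Set α)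
    (h : t < ‖∑ i ∈ s, u i (x i)‖₊) :
    (t : ℝ≥0∞) ^ 2 ≤ ∑ i ∈ s, (B i)ᶜ.indicator (fun _ => (t : ℝ≥0∞) ^ 2) (x i)
      + ‖∑ i ∈ s, (B i).indicator (u i) (x i)‖ₑ ^ 2 := by
  by_cases hB : ∀ i ∈ s, x i ∈ B i
  · rw [Finset.sum_congr rfl fun i hi => indicator_of_mem (hB i hi) (u i)]
    refine le_add_left (pow_le_pow_left' ?_ 2)
    exact_mod_cast h.le
  · push Not at hB
    obtain ⟨i, hi, hxi⟩ := hB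
    refine le_add_right ?_
    calc (t : ℝ≥0∞) ^ 2 = (B i)ᶜ.indicator (fun _ => (t : ℝ≥0∞) ^ 2) (x i) := by
          rw [indicator_of_mem hxi]
      _ ≤ ∑ i ∈ s, (B i)ᶜ.indicator (fun _ => (t : ℝ≥0∞) ^ 2) (x i) :=
          Finset.single_le_sum (f := fun i => (B i)ᶜ.indicator (fun _ => (t : ℝ≥0∞) ^ 2) (x i))
            (fun _ _ => zero_le) hi

namespace ZRiesz

theorem mul_count_setOf_lt_le_natWk (F : ℕ → ℂ) (t : ℝ≥0) :
    t * Measure.count {n | (t : ℝ≥0∞) < ‖F n‖ₑ} ≤ natWk F := by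
  simp only [enorm_eq_nnnorm, ENNReal.coe_lt_coe]
  rw [Measure.count_apply .of_discrete, ← ENNReal.tsum_set_one]
  exact le_iSup (fun t : ℝ≥0 => (t : ℝ≥0∞) * ∑' (_ : {n : ℕ | t < ‖F n‖₊}), (1 : ℝ≥0∞)) t

theorem enorm_le_natWk (F : ℕ → ℂ) (n : ℕ) : ‖F n‖ₑ ≤ natWk F := by
  refine le_of_forall_nnreal_lt fun t ht => ?_
  have hcount : 1 ≤ Measure.count {n | (t : ℝ≥0∞) < ‖F n‖ₑ} := by
    rw [← Measure.count_singleton n]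
    exact measure_mono (singleton_subset_iff.2 ht)
  exact (le_mul_of_one_le_right' hcount).trans (mul_count_setOf_lt_le_natWk F t)

theorem mul_count_setOf_lt_mul_le (F : ℕ → ℂ) (b t : ℝ≥0) :
    t * Measure.count {n | (t : ℝ≥0∞) < ‖F n‖ₑ * b} ≤ natWk F * b := by
  rcases eq_or_ne b 0 with rfl | hb
  · simp
  have hb₀ : (b : ℝ≥0∞) ≠ 0 := by exact_mod_cast hb
  have hlt : ∀ n, (t : ℝ≥0∞) < ‖F n‖ₑ * b ↔ ((t / b : ℝ≥0) : ℝ≥0∞) < ‖F n‖ₑ := fun n => by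
    rw [coe_div hb, ENNReal.div_lt_iff (.inl hb₀) (.inl coe_ne_top)]
  calc (t : ℝ≥0∞) * Measure.count {n | (t : ℝ≥0∞) < ‖F n‖ₑ * b}
      = (t / b : ℝ≥0) * Measure.count {n | ((t / b : ℝ≥0) : ℝ≥0∞) < ‖F n‖ₑ} * b := by
        rw [mul_right_comm, ← coe_mul, div_mul_cancel₀ t hb]
        simp only [hlt]
    _ ≤ natWk F * b := by
        gcongr
        exact mul_count_setOf_lt_le_natWk F (t / b)

theorem tsum_min_sq_le (F : ℕ → ℂ) (b t : ℝ≥0) :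
    ∑' n, min (‖F n‖ₑ * b) t ^ 2 ≤ 2 * (natWk F * b) * t := by
  rw [← lintegral_count]
  exact lintegral_min_sq_le_of_mul_meas_lt_le (Measurable.of_discrete).aemeasurable
    (mul_count_setOf_lt_mul_le F b) t

end ZRiesz

namespace FlowTree

variable {q : ℕ} (S : FlowTree q)

theorem q_ne_zero_of_vertex (x : S.V) : q ≠ 0 := by
  rw [← S.succ_card (S.pred x)]
  exact Nat.card_ne_zero.2 ⟨⟨⟨x, rfl⟩⟩, S.succ_finite (S.pred x)⟩

theorem w_ne_zero (x : S.V) : S.w x ≠ 0 :=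
  (ENNReal.rpow_pos (Nat.cast_pos.2 (Nat.pos_of_ne_zero (S.q_ne_zero_of_vertex x)))
    (natCast_ne_top q)).ne'

theorem w_ne_top (x : S.V) : S.w x ≠ ∞ :=
  rpow_ne_top_of_ne_zero (Nat.cast_ne_zero.2 (S.q_ne_zero_of_vertex x)) (natCast_ne_top q)

theorem w_pred (x : S.V) : S.w (S.pred x) = q * S.w x := by
  have hq : (q : ℝ≥0∞) ≠ 0 := Nat.cast_ne_zero.2 (S.q_ne_zero_of_vertex x)
  simp only [w, S.level_pred, Int.cast_add, Int.cast_one]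
  rw [ENNReal.rpow_add _ _ hq (natCast_ne_top q), ENNReal.rpow_one, mul_comm]

theorem w_le_w_iterate_pred (n : ℕ) (x : S.V) : S.w x ≤ S.w (S.pred^[n] x) := by
  induction n with
  | zero => rfl
  | succ n ih =>
    rw [Function.iterate_succ_apply', S.w_pred]
    exact ih.trans (le_mul_of_one_le_left'
      (by exact_mod_cast Nat.one_le_iff_ne_zero.2 (S.q_ne_zero_of_vertex x)))

theorem level_iterate_pred (n : ℕ) (x : S.V) : S.level (S.pred^[n] x) = S.level x + n := by
  induction n with
  | zero => simp
  | succ n ih =>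
    rw [Function.iterate_succ_apply', S.level_pred, ih]
    push_cast
    ring

theorem iterate_pred_injective (x : S.V) : Function.Injective fun n => S.pred^[n] x := by
  intro m n h
  have hlevel := congrArg S.level h
  simp only [level_iterate_pred] at hlevel
  omega

theorem tsum_w_mul_eq_tsum_tsum_succ (g : S.V → ℝ≥0∞) :
    ∑' x, S.w x * g x = ∑' z, S.w z * ((q : ℝ≥0∞)⁻¹ * ∑' y : {y // S.pred y = z}, g y) := by
  rw [← (Equiv.sigmaFiberEquiv S.pred).tsum_eq, ENNReal.tsum_sigma']
  refine tsum_congr fun z => ?_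
  rw [← ENNReal.tsum_mul_left, ← ENNReal.tsum_mul_left]
  refine tsum_congr fun y => ?_
  have hq : (q : ℝ≥0∞) ≠ 0 := Nat.cast_ne_zero.2 (S.q_ne_zero_of_vertex z)
  have hw : S.w z = S.w y * q := by rw [mul_comm, ← S.w_pred, y.2]
  rw [← mul_assoc, hw, ENNReal.mul_inv_cancel_right hq (natCast_ne_top q)]
  rfl

theorem tsum_w_mul_comp_pred (g : S.V → ℝ≥0∞) :
    ∑' x, S.w x * g (S.pred x) = ∑' x, S.w x * g x := by
  rw [tsum_w_mul_eq_tsum_tsum_succ]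
  refine tsum_congr fun z => ?_
  have hq : (q : ℝ≥0∞) ≠ 0 := Nat.cast_ne_zero.2 (S.q_ne_zero_of_vertex z)
  have hcard : ∑' y : {y // S.pred y = z}, g (S.pred y) = q * g z := by
    have : Finite {y // S.pred y = z} := S.succ_finite z
    rw [tsum_congr fun y => congrArg g y.2, ENNReal.tsum_const, ENat.card_eq_coe_natCard,
      S.succ_card]
    rfl
  rw [hcard, ENNReal.inv_mul_cancel_left hq (natCast_ne_top q)]

theorem tsum_w_mul_comp_iterate_pred (g : S.V → ℝ≥0∞) (n : ℕ) :
    ∑' x, S.w x * g (S.pred^[n] x) = ∑' x, S.w x * g x := by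
  induction n with
  | zero => rfl
  | succ n ih => exact (S.tsum_w_mul_comp_pred fun x => g (S.pred^[n] x)).trans ih

theorem mul_muS_le_tsum_w_mul {E : Set S.V} {c : ℝ≥0∞} {g : S.V → ℝ≥0∞}
    (h : ∀ x ∈ E, c ≤ g x) : c * S.muS E ≤ ∑' x, S.w x * g x :=
  calc c * S.muS E = ∑' x : E, S.w x * c := by
        rw [muS, ENNReal.tsum_mul_right, mul_comm]
    _ ≤ ∑' x : E, S.w x * g x := by
        gcongr with x
        exact h x x.2
    _ ≤ ∑' x, S.w x * g x :=
        ENNReal.tsum_comp_le_tsum_of_injective Subtype.val_injective fun x => S.w x * g x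

theorem muS_le_of_eventually_mem {ι : Type*} {l : Filter ι} [l.NeBot] {E : Set S.V}
    {E' : ι → Set S.V} {B : ℝ≥0∞} (hE : ∀ x ∈ E, ∀ᶠ i in l, x ∈ E' i)
    (hB : ∀ i, S.muS (E' i) ≤ B) : S.muS E ≤ B := by
  rw [muS, ENNReal.tsum_eq_iSup_sum]
  refine iSup_le fun s => ?_
  obtain ⟨i, hi⟩ := ((Filter.eventually_all_finset s).2 fun x _ => hE x x.2).exists
  have hinj : Function.Injective fun x : s => (⟨x, hi x x.2⟩ : E' i) := fun x y h =>
    Subtype.ext (Subtype.ext (Subtype.mk.inj h))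
  calc ∑ x ∈ s, S.w x = ∑' x : s, S.w x := by rw [tsum_fintype, s.sum_coe_sort fun x : E => S.w x]
    _ ≤ S.muS (E' i) := ENNReal.tsum_comp_le_tsum_of_injective hinj fun x : E' i => S.w x
    _ ≤ B := hB i

theorem lpNorm_one {E : Type*} [SeminormedAddCommGroup E] (f : S.V → E) :
    S.lpNorm 1 f = ∑' x, S.w x * ‖f x‖ₑ := by
  simp [lpNorm, mul_comm, enorm_eq_nnnorm]

theorem lpNorm_one_ne_top_of_finite_support {E : Type*} [SeminormedAddCommGroup E] {f : S.V → E}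
    (hf : (Function.support f).Finite) : S.lpNorm 1 f ≠ ∞ := by
  have hzero : ∀ x ∉ hf.toFinset, S.w x * ‖f x‖ₑ = 0 := fun x hx => by
    rw [show f x = 0 by simpa using hx, enorm_eq_nnnorm, nnnorm_zero, coe_zero, mul_zero]
  rw [lpNorm_one, tsum_eq_sum hzero]
  exact sum_ne_top.2 fun x _ => ENNReal.mul_ne_top (S.w_ne_top x) enorm_ne_top

theorem enorm_le_epsSup (ε : S.V → ℂ) (x : S.V) : ‖ε x‖ₑ ≤ S.epsSup ε :=
  le_iSup (fun x => (‖ε x‖₊ : ℝ≥0∞)) x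

theorem epsSup_ne_top {ε : S.V → ℂ} (hε : ∃ M : ℝ, ∀ x, ‖ε x‖ ≤ M) : S.epsSup ε ≠ ∞ := by
  obtain ⟨M, hM⟩ := hε
  refine ne_top_of_le_ne_top (coe_ne_top (r := M.toNNReal)) (iSup_le fun x => ?_)
  exact_mod_cast NNReal.le_toNNReal_of_coe_le (hM x)

theorem enorm_hgradStar_le (ε f : S.V → ℂ) (x : S.V) :
    ‖S.hgradStar ε f x‖ₑ ≤ S.epsSup ε * ‖f (S.pred x)‖ₑ := by
  rw [hgradStar, enorm_mul, RCLike.enorm_conj]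
  gcongr
  exact S.enorm_le_epsSup ε x

theorem tsum_enorm_iterate_pred_ne_top {E : Type*} [SeminormedAddCommGroup E] {f : S.V → E}
    (hf : S.lpNorm 1 f ≠ ∞) (x : S.V) : ∑' n, ‖f (S.pred^[n] x)‖ₑ ≠ ∞ := by
  have hle : S.w x * ∑' n, ‖f (S.pred^[n] x)‖ₑ ≤ S.lpNorm 1 f :=
    calc S.w x * ∑' n, ‖f (S.pred^[n] x)‖ₑ
        ≤ ∑' n, S.w (S.pred^[n] x) * ‖f (S.pred^[n] x)‖ₑ := by
          rw [← ENNReal.tsum_mul_left]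
          gcongr with n
          exact S.w_le_w_iterate_pred n x
      _ ≤ S.lpNorm 1 f := by
          rw [lpNorm_one]
          exact ENNReal.tsum_comp_le_tsum_of_injective (S.iterate_pred_injective x)
            fun z => S.w z * ‖f z‖ₑ
  exact fun htop => hf (top_le_iff.1 (by rwa [htop, mul_top (S.w_ne_zero x)] at hle))

open ZRiesz in
theorem summable_mul_hgradStar_iterate_pred {ε f : S.V → ℂ} {F : ℕ → ℂ} (hε : S.epsSup ε ≠ ∞)
    (hF : natWk F ≠ ∞) (hf : S.lpNorm 1 f ≠ ∞) (x : S.V) :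
    Summable fun n => F n * S.hgradStar ε f (S.pred^[n] x) := by
  refine .of_enorm (ne_top_of_le_ne_top (ENNReal.mul_ne_top (ENNReal.mul_ne_top hF hε)
    (S.tsum_enorm_iterate_pred_ne_top hf (S.pred x))) ?_)
  rw [← ENNReal.tsum_mul_left]
  refine ENNReal.tsum_le_tsum fun n => ?_
  rw [enorm_mul, mul_assoc, ← Function.iterate_succ_apply, Function.iterate_succ_apply']
  exact mul_le_mul' (enorm_le_natWk F n) (S.enorm_hgradStar_le ε f _)

section Horizontal

variable {S} {E : Type*} [NormedAddCommGroup E]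

variable (S) in
/-- Horizontal functions: the kernel of `Σ*`. They play the role of martingale differences for the
flow measure: in `L²(μ)` they are orthogonal to the range of `Σ`. The `tsum` is a finite sum,
every vertex having finitely many successors. -/
def IsHorizontal (u : S.V → E) : Prop :=
  ∀ x : S.V, ∑' y : {y | S.pred y = x}, u y.1 = 0

theorem IsHorizontal.hgradStar {ε : S.V → ℂ} (hε : S.IsHorizontal ε) (f : S.V → ℂ) :
    S.IsHorizontal (S.hgradStar ε f) := fun x =>
  calc ∑' y : {y | S.pred y = x}, (starRingEnd ℂ) (ε y.1) * f (S.pred y.1)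
      = (∑' y : {y | S.pred y = x}, (starRingEnd ℂ) (ε y.1)) * f x := by
        rw [← tsum_mul_right]
        exact tsum_congr fun y => by rw [y.2]
    _ = 0 := by rw [← Complex.conj_tsum, hε x, map_zero, zero_mul]

theorem IsHorizontal.const_mul {u : S.V → ℂ} (hu : S.IsHorizontal u) (c : ℂ) :
    S.IsHorizontal fun x => c * u x := fun x => by
  rw [tsum_mul_left, hu x, mul_zero]

theorem IsHorizontal.indicator_preimage_pred {u : S.V → E} (hu : S.IsHorizontal u)
    (B : Set S.V) : S.IsHorizontal ((S.pred ⁻¹' B).indicator u) := by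
  intro x
  have hind : ∀ y : {y | S.pred y = x},
      (S.pred ⁻¹' B).indicator u y = if x ∈ B then u y else 0 := fun y => by
    simp only [indicator_apply, mem_preimage, show S.pred y = x from y.2]
  rw [tsum_congr hind]
  split_ifs
  · exact hu x
  · exact tsum_zero

variable [InnerProductSpace ℝ E]

theorem IsHorizontal.tsum_succ_enorm_add_sq {u : S.V → E} (hu : S.IsHorizontal u) (z : S.V)
    (h : E) : ∑' y : {y // S.pred y = z}, ‖u y + h‖ₑ ^ 2
      = ∑' y : {y // S.pred y = z}, (‖u y‖ₑ ^ 2 + ‖h‖ₑ ^ 2) := by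
  have : Fintype {y // S.pred y = z} := (S.succ_finite z).fintype
  have hsum : ∑ y : {y // S.pred y = z}, u y = 0 := by
    rw [← tsum_fintype (L := .unconditional _)]
    exact hu z
  simp only [tsum_fintype, enorm_eq_nnnorm]
  exact_mod_cast NNReal.eq (by push_cast; exact sum_norm_add_sq_of_sum_eq_zero hsum h)

theorem IsHorizontal.tsum_w_mul_enorm_add_comp_pred_sq {u : S.V → E} (hu : S.IsHorizontal u)
    (h : S.V → E) : ∑' x, S.w x * ‖u x + h (S.pred x)‖ₑ ^ 2
      = ∑' x, S.w x * ‖u x‖ₑ ^ 2 + ∑' x, S.w x * ‖h x‖ₑ ^ 2 := by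
  rw [← S.tsum_w_mul_comp_pred fun x => ‖h x‖ₑ ^ 2, ← ENNReal.tsum_add]
  simp only [← mul_add]
  rw [S.tsum_w_mul_eq_tsum_tsum_succ,
    S.tsum_w_mul_eq_tsum_tsum_succ fun x => ‖u x‖ₑ ^ 2 + ‖h (S.pred x)‖ₑ ^ 2]
  refine tsum_congr fun z => congrArg (fun r => S.w z * ((q : ℝ≥0∞)⁻¹ * r)) ?_
  calc ∑' y : {y // S.pred y = z}, ‖u y + h (S.pred y)‖ₑ ^ 2
      = ∑' y : {y // S.pred y = z}, ‖u y + h z‖ₑ ^ 2 := tsum_congr fun y => by rw [y.2]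
    _ = ∑' y : {y // S.pred y = z}, (‖u y‖ₑ ^ 2 + ‖h z‖ₑ ^ 2) := hu.tsum_succ_enorm_add_sq z (h z)
    _ = _ := tsum_congr fun y => by rw [y.2]

theorem tsum_w_mul_enorm_sum_iterate_pred_sq {u : ℕ → S.V → E}
    (hu : ∀ n, S.IsHorizontal (u n)) (N : ℕ) :
    ∑' x, S.w x * ‖∑ n ∈ Finset.range N, u n (S.pred^[n] x)‖ₑ ^ 2
      = ∑ n ∈ Finset.range N, ∑' x, S.w x * ‖u n x‖ₑ ^ 2 := by
  induction N generalizing u with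
  | zero => simp
  | succ N ih =>
    have htail := ih fun n => hu (n + 1)
    have hpyth := (hu 0).tsum_w_mul_enorm_add_comp_pred_sq
      fun x => ∑ n ∈ Finset.range N, u (n + 1) (S.pred^[n] x)
    rw [htail] at hpyth
    simpa only [Finset.sum_range_succ', add_comm, Function.iterate_succ_apply,
      Function.iterate_zero, id] using hpyth

theorem sq_mul_muS_sum_iterate_pred_le {u : ℕ → S.V → E} (hu : ∀ n, S.IsHorizontal (u n))
    {a : ℕ → S.V → ℝ≥0∞} (ha : ∀ n x, ‖u n x‖ₑ ≤ a n (S.pred x)) (t : ℝ≥0) (N : ℕ) :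
    (t : ℝ≥0∞) ^ 2 * S.muS {x | t < ‖∑ n ∈ Finset.range N, u n (S.pred^[n] x)‖₊}
      ≤ ∑ n ∈ Finset.range N, ∑' x, S.w x * min (a n x) t ^ 2 := by
  let B : ℕ → Set S.V := fun n => S.pred ⁻¹' {z | a n z ≤ t}
  let large : ℕ → S.V → ℝ≥0∞ := fun n => (B n)ᶜ.indicator fun _ => (t : ℝ≥0∞) ^ 2
  let small : ℕ → S.V → E := fun n => (B n).indicator (u n)
  have hmin : ∀ n x, large n x + ‖small n x‖ₑ ^ 2 ≤ min (a n (S.pred x)) t ^ 2 := by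
    intro n x
    by_cases hx : x ∈ B n
    · have hax : a n (S.pred x) ≤ t := hx
      simpa [large, small, hx, hax] using pow_le_pow_left' (ha n x) 2
    · have hax : t ≤ a n (S.pred x) := (not_le.1 hx).le
      simp [large, small, hx, hax]
  calc (t : ℝ≥0∞) ^ 2 * S.muS {x | t < ‖∑ n ∈ Finset.range N, u n (S.pred^[n] x)‖₊}
      ≤ ∑' x, S.w x * (∑ n ∈ Finset.range N, large n (S.pred^[n] x)
          + ‖∑ n ∈ Finset.range N, small n (S.pred^[n] x)‖ₑ ^ 2) :=
        S.mul_muS_le_tsum_w_mul fun x hx => sq_le_sum_indicator_add_enorm_sum_indicator_sq B hx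
    _ = ∑ n ∈ Finset.range N, ∑' x, S.w x * (large n x + ‖small n x‖ₑ ^ 2) := by
        simp only [mul_add, Finset.mul_sum, ENNReal.tsum_add, Finset.sum_add_distrib,
          Summable.tsum_finsetSum fun _ _ => ENNReal.summable, S.tsum_w_mul_comp_iterate_pred]
        rw [tsum_w_mul_enorm_sum_iterate_pred_sq fun n => (hu n).indicator_preimage_pred _]
    _ ≤ ∑ n ∈ Finset.range N, ∑' x, S.w x * min (a n (S.pred x)) t ^ 2 := by
        gcongr with n _ x
        exact hmin n x
    _ = ∑ n ∈ Finset.range N, ∑' x, S.w x * min (a n x) t ^ 2 :=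
        Finset.sum_congr rfl fun n _ => S.tsum_w_mul_comp_pred fun z => min (a n z) t ^ 2

end Horizontal

open ZRiesz in
theorem mul_muS_sum_mul_hgradStar_le {ε : S.V → ℂ} (hε : S.epsSup ε ≠ ∞)
    (hz : S.IsHorizontal ε) (F : ℕ → ℂ) (f : S.V → ℂ) (t : ℝ≥0) (N : ℕ) :
    t * S.muS {x | t < ‖∑ n ∈ Finset.range N, F n * S.hgradStar ε f (S.pred^[n] x)‖₊}
      ≤ 2 * natWk F * S.epsSup ε * S.lpNorm 1 f := by
  rcases eq_or_ne t 0 with rfl | ht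
  · simp
  let b : S.V → ℝ≥0 := fun z => (S.epsSup ε).toNNReal * ‖f z‖₊
  have hb : ∀ z, (b z : ℝ≥0∞) = S.epsSup ε * ‖f z‖ₑ := fun z => by
    rw [coe_mul, coe_toNNReal hε, enorm_eq_nnnorm]
  have hbound : ∀ n x, ‖F n * S.hgradStar ε f x‖ₑ ≤ ‖F n‖ₑ * b (S.pred x) := fun n x => by
    rw [enorm_mul, hb]
    gcongr
    exact S.enorm_hgradStar_le ε f x
  have hsq := sq_mul_muS_sum_iterate_pred_le (fun n => (hz.hgradStar f).const_mul (F n))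
    (a := fun n z => ‖F n‖ₑ * b z) hbound t N
  refine (ENNReal.mul_le_mul_iff_right (coe_ne_zero.2 ht) coe_ne_top).1 ?_
  rw [← mul_assoc, ← sq]
  refine hsq.trans ?_
  calc ∑ n ∈ Finset.range N, ∑' z, S.w z * min (‖F n‖ₑ * b z) t ^ 2
      = ∑' z, S.w z * ∑ n ∈ Finset.range N, min (‖F n‖ₑ * b z) t ^ 2 := by
        simp only [Finset.mul_sum, Summable.tsum_finsetSum fun _ _ => ENNReal.summable]
    _ ≤ ∑' z, S.w z * (2 * (natWk F * b z) * t) := by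
        gcongr with z
        exact (ENNReal.sum_le_tsum _).trans (tsum_min_sq_le F (b z) t)
    _ = ∑' z, t * (2 * natWk F * S.epsSup ε) * (S.w z * ‖f z‖ₑ) :=
        tsum_congr fun z => by rw [hb]; ring
    _ = t * (2 * natWk F * S.epsSup ε * S.lpNorm 1 f) := by
        rw [ENNReal.tsum_mul_left, lpNorm_one, mul_assoc]

end FlowTree

open ZRiesz in
theorem P_operator_weak11_general {q : ℕ} (S : FlowTree q)
    (eps : S.V → ℂ) (hb : ∃ M : ℝ, ∀ x, ‖eps x‖ ≤ M)
    (hz : ∀ x : S.V, ∑' y : {y | S.pred y = x}, eps y.1 = 0)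
    (F : ℕ → ℂ) (hF : natWk F ≠ ∞)
    (f : S.V → ℂ) (hf : S.lpNorm 1 f ≠ ∞) (lam : ℝ) (hlam : 0 < lam) :
    S.muS {x | lam < ‖∑' n : ℕ, F n * S.hgradStar eps f (S.pred^[n] x)‖}
      ≤ 2 * natWk F * S.epsSup eps * S.lpNorm 1 f / ENNReal.ofReal lam := by
  have hsup := S.epsSup_ne_top hb
  lift lam to ℝ≥0 using hlam.le
  refine S.muS_le_of_eventually_mem (l := Filter.atTop)
    (E' := fun N => {x | lam < ‖∑ n ∈ Finset.range N, F n * S.hgradStar eps f (S.pred^[n] x)‖₊})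
    (fun x hx => ?_) fun N => ?_
  · have hsum := S.summable_mul_hgradStar_iterate_pred hsup hF hf x
    exact hsum.hasSum.tendsto_sum_nat.nnnorm.eventually_const_lt hx
  · rw [ofReal_coe_nnreal, ENNReal.le_div_iff_mul_le (.inl (by simpa using hlam.ne'))
      (.inl coe_ne_top), mul_comm]
    exact S.mul_muS_sum_mul_hgradStar_le hsup hz F f lam N

open ZRiesz in
/-- weak type `(1,1)` bound for `𝒫f = Σ_{n≥0} F(n) Σⁿ∇_ε* f` with
`F ∈ ℓ^{1,∞}(ℕ)`: `μ({|𝒫f| > λ}) ≤ 3 ‖F‖_{ℓ^{1,∞}} ‖ε‖_∞ ‖f‖₁ / λ`. -/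
theorem P_operator_weak11 {q : ℕ} (hq : 2 ≤ q) (S : FlowTree q)
    (eps : S.V → ℂ) (hb : ∃ M : ℝ, ∀ x, ‖eps x‖ ≤ M)
    (hz : ∀ x : S.V, ∑' y : {y | S.pred y = x}, eps y.1 = 0)
    (F : ℕ → ℂ) (hF : natWk F ≠ ∞)
    (f : S.V → ℂ) (hf : (Function.support f).Finite) (lam : ℝ) (hlam : 0 < lam) :
    S.muS {x | lam < ‖∑' n : ℕ, F n * S.hgradStar eps f (S.pred^[n] x)‖}
      ≤ 3 * natWk F * S.epsSup eps * S.lpNorm 1 f / ENNReal.ofReal lam :=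
  (P_operator_weak11_general S eps hb hz F hF f (S.lpNorm_one_ne_top_of_finite_support hf) lam
    hlam).trans (by gcongr; norm_num)
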